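/- arXiv:1804.02700 — 2 statements merged into one kernel-verified Lean document; each statement's English description precedes it below -/
import Mathlib

section
/- Let M and M′ be ρ×κ integer matrices. If for every abelian group A the group homomorphisms f_M, f_{M′} : A^ρ → A^κ induced by M and M′ have isomorphic kernels, then M and M′ are equivalent, i.e. there exist unimodular matrices U₁, U₂ with U₁MU₂ = M′. -/
/-- The group homomorphism `f_M : A^ρ → A^κ` induced by an integer matrix `M`,
given by `f_M(x)_j = ∑ i, M i j • x i`. -/
def matHom {ρ κ : ℕ} (A : Type*) [AddCommGroup A] (M : Matrix (Fin ρ) (Fin κ) ℤ) :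
    (Fin ρ → A) →+ (Fin κ → A) where
  toFun x := fun j => ∑ i, M i j • x i
  map_zero' := by funext j; simp
  map_add' x y := by funext j; simp [smul_add, Finset.sum_add_distrib]


/-!
The matrices `M` and `M'` have Smith normal forms with diagonal entries `d₁ ∣ d₂ ∣ ⋯` and
`e₁ ∣ e₂ ∣ ⋯`, padded with zeros up to length `ρ`. Equivalent matrices induce homomorphisms with
isomorphic kernels, so counting the kernels on `A = ℤ/n` gives `∏ gcd(n, dᵢ) = ∏ gcd(n, eᵢ)` for
every `n ≥ 1`. Suppose that `dⱼ = eⱼ` up to sign for `j < i` and that `n ∣ dᵢ`. Then the factors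
`gcd(n, dⱼ)` with `j ≥ i` all take their largest possible value `n`, so equality of the products
forces `n ∣ eᵢ`. By symmetry `dᵢ` and `eᵢ` have the same divisors.
-/

section UnimodularEquivalence

open Matrix

variable {l l' m n m' n' R : Type*} [CommRing R]
  [Fintype l] [DecidableEq l] [Fintype l'] [DecidableEq l']
  [Fintype m'] [DecidableEq m'] [Fintype n'] [DecidableEq n']
  [Fintype m] [DecidableEq m] [Fintype n] [DecidableEq n]

/-- Equivalence of matrices over a commutative ring: `N = U * M * V` for some square matrices `U`
and `V` that are invertible over the ring, which is expressed through their determinants. -/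
def UnimodularEquivalent (M N : Matrix m n R) : Prop :=
  ∃ (U : Matrix m m R) (V : Matrix n n R), IsUnit U.det ∧ IsUnit V.det ∧ U * M * V = N

namespace UnimodularEquivalent

variable {M N P : Matrix m n R}

lemma mul_left {U : Matrix m m R} (hU : IsUnit U.det) (M : Matrix m n R) :
    UnimodularEquivalent M (U * M) :=
  ⟨U, 1, hU, by simp, by simp⟩

@[refl]
lemma refl (M : Matrix m n R) : UnimodularEquivalent M M :=
  ⟨1, 1, by simp, by simp, by simp⟩

@[symm]
lemma symm (h : UnimodularEquivalent M N) : UnimodularEquivalent N M := by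
  obtain ⟨U, V, hU, hV, rfl⟩ := h
  refine ⟨U⁻¹, V⁻¹, isUnit_nonsing_inv_det U hU, isUnit_nonsing_inv_det V hV, ?_⟩
  rw [Matrix.mul_assoc U, nonsing_inv_mul_cancel_left _ _ hU, mul_nonsing_inv_cancel_right _ _ hV]

@[trans]
lemma trans (h : UnimodularEquivalent M N) (h' : UnimodularEquivalent N P) :
    UnimodularEquivalent M P := by
  obtain ⟨U, V, hU, hV, rfl⟩ := h
  obtain ⟨U', V', hU', hV', rfl⟩ := h'
  refine ⟨U' * U, V * V', ?_, ?_, by simp only [Matrix.mul_assoc]⟩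
  · simpa only [det_mul] using hU'.mul hU
  · simpa only [det_mul] using hV.mul hV'

lemma transpose (h : UnimodularEquivalent M N) : UnimodularEquivalent Mᵀ Nᵀ := by
  obtain ⟨U, V, hU, hV, rfl⟩ := h
  exact ⟨Vᵀ, Uᵀ, by rwa [det_transpose], by rwa [det_transpose],
    by simp only [transpose_mul, Matrix.mul_assoc]⟩

lemma smul (c : R) (h : UnimodularEquivalent M N) : UnimodularEquivalent (c • M) (c • N) := by
  obtain ⟨U, V, hU, hV, rfl⟩ := h
  exact ⟨U, V, hU, hV, by simp⟩

lemma submatrix (e : m' ≃ m) (f : n' ≃ n) (h : UnimodularEquivalent M N) :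
    UnimodularEquivalent (M.submatrix e f) (N.submatrix e f) := by
  obtain ⟨U, V, hU, hV, rfl⟩ := h
  exact ⟨U.submatrix e e, V.submatrix f f, by rwa [det_submatrix_equiv_self],
    by rwa [det_submatrix_equiv_self], by simp only [submatrix_mul_equiv]⟩

lemma submatrix_perm (M : Matrix m n R) (σ : Equiv.Perm m) (τ : Equiv.Perm n) :
    UnimodularEquivalent M (M.submatrix σ τ) := by
  have isUnit_sign {k : ℤˣ} : IsUnit ((k : ℤ) : R) := k.isUnit.map (Int.castRingHom R)
  refine ⟨σ.permMatrix R, Equiv.Perm.permMatrix R τ.symm, ?_, ?_, ?_⟩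
  · simpa only [det_permutation] using isUnit_sign
  · simpa only [det_permutation] using isUnit_sign
  · rw [PEquiv.toMatrix_toPEquiv_mul, PEquiv.mul_toMatrix_toPEquiv, submatrix_submatrix]
    rfl

lemma fromBlocks_diagonal {A A' : Matrix l l' R} (hA : UnimodularEquivalent A A')
    (hM : UnimodularEquivalent M N) :
    UnimodularEquivalent (fromBlocks A 0 0 M) (fromBlocks A' 0 0 N) := by
  obtain ⟨U, V, hU, hV, rfl⟩ := hA
  obtain ⟨U', V', hU', hV', rfl⟩ := hM
  refine ⟨fromBlocks U 0 0 U', fromBlocks V 0 0 V', ?_, ?_, by simp [fromBlocks_multiply]⟩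
  · simpa only [det_fromBlocks_zero₁₂] using hU.mul hU'
  · simpa only [det_fromBlocks_zero₁₂] using hV.mul hV'

lemma fromBlocks_schur (A : Matrix l l' R) (B : Matrix l' n R) (C : Matrix m l R)
    (D : Matrix m n R) :
    UnimodularEquivalent (fromBlocks A (A * B) (C * A) D)
      (fromBlocks A 0 0 (D - C * A * B)) := by
  refine ⟨fromBlocks 1 0 (-C) 1, fromBlocks 1 (-B) 0 1, by simp, by simp, ?_⟩
  simp [fromBlocks_multiply, sub_eq_neg_add, Matrix.mul_assoc]

end UnimodularEquivalent

end UnimodularEquivalence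

section MinimalPivot

open Matrix

variable {m n R : Type*} [EuclideanDomain R]
  [Fintype m] [DecidableEq m] [Fintype n] [DecidableEq n]

/-- A nonzero entry of `M` whose Euclidean size is minimal among all nonzero entries of all matrices
equivalent to `M`. Such an entry is the pivot of one step of the Smith normal form algorithm. -/
def IsMinimalPivot (M : Matrix m n R) (i : m) (j : n) : Prop :=
  M i j ≠ 0 ∧ ∀ N, UnimodularEquivalent M N → ∀ k l, N k l ≠ 0 → ¬ EuclideanDomain.r (N k l) (M i j)

namespace IsMinimalPivot

variable {M N : Matrix m n R} {i : m} {j : n}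

lemma of_equivalent (h : IsMinimalPivot M i j) (hMN : UnimodularEquivalent M N) {k : m} {l : n}
    (hN : N k l = M i j) : IsMinimalPivot N k l :=
  ⟨hN ▸ h.1, fun P hP ↦ hN ▸ h.2 P (hMN.trans hP)⟩

lemma transpose (h : IsMinimalPivot M i j) : IsMinimalPivot Mᵀ j i :=
  ⟨h.1, fun N hN k l ↦ h.2 Nᵀ (by simpa using hN.transpose) l k⟩

lemma dvd_col (h : IsMinimalPivot M i j) (k : m) : M i j ∣ M k j := by
  obtain rfl | hki := eq_or_ne k i
  · exact dvd_rfl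
  set T := transvection k i (-(M k j / M i j))
  have hT : UnimodularEquivalent M (T * M) :=
    .mul_left (by simp [T, det_transvection_of_ne k i hki]) M
  have hTkj : (T * M) k j = M k j % M i j := by
    rw [transvection_mul_apply_same, EuclideanDomain.mod_eq_sub_mul_div]
    ring
  by_contra hdvd
  refine h.2 _ hT k j ?_ ?_ <;> rw [hTkj]
  · rwa [Ne, EuclideanDomain.mod_eq_zero]
  · exact EuclideanDomain.mod_lt _ h.1

lemma dvd_row (h : IsMinimalPivot M i j) (l : n) : M i j ∣ M i l :=
  h.transpose.dvd_col l

-- If `M k j = q * M i j`, adding `1 - q` times row `i` to row `k` copies the pivot to `(k, j)`,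
-- where it divides the new row `k`.
lemma dvd_apply (h : IsMinimalPivot M i j) (k : m) (l : n) : M i j ∣ M k l := by
  obtain rfl | hki := eq_or_ne k i
  · exact h.dvd_row l
  obtain ⟨q, hq⟩ := h.dvd_col k
  set T := transvection k i (1 - q)
  have hT : UnimodularEquivalent M (T * M) :=
    .mul_left (by simp [T, det_transvection_of_ne k i hki]) M
  have hTkj : (T * M) k j = M i j := by
    rw [transvection_mul_apply_same, hq]
    ring
  have hTkl := (h.of_equivalent hT hTkj).dvd_row l
  rwa [hTkj, transvection_mul_apply_same, dvd_add_left ((h.dvd_row l).mul_left _)] at hTkl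

end IsMinimalPivot

lemma exists_isMinimalPivot {M : Matrix m n R} (hM : M ≠ 0) :
    ∃ N, UnimodularEquivalent M N ∧ ∃ i j, IsMinimalPivot N i j := by
  let S : Set R := {a | a ≠ 0 ∧ ∃ N, UnimodularEquivalent M N ∧ ∃ i j, N i j = a}
  have hS : S.Nonempty := by
    obtain ⟨i, j, hij⟩ : ∃ i j, M i j ≠ 0 := by
      contrapose! hM
      exact Matrix.ext hM
    exact ⟨M i j, hij, M, .refl M, i, j, rfl⟩
  obtain ⟨_, ⟨hN0, N, hMN, i, j, rfl⟩, hmin⟩ := EuclideanDomain.r_wellFounded.has_min S hS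
  exact ⟨N, hMN, i, j, hN0, fun P hP k l hkl ↦ hmin _ ⟨hkl, P, hMN.trans hP, k, l, rfl⟩⟩

lemma exists_unimodularEquivalent_forall_dvd (M : Matrix m n R) (i : m) (j : n) :
    ∃ N, UnimodularEquivalent M N ∧ ∀ k l, N i j ∣ N k l := by
  obtain rfl | hM := eq_or_ne M 0
  · exact ⟨0, .refl 0, by simp⟩
  obtain ⟨N, hMN, i', j', h⟩ := exists_isMinimalPivot hM
  refine ⟨N.submatrix (Equiv.swap i i') (Equiv.swap j j'),
    hMN.trans (.submatrix_perm N _ _), fun k l ↦ ?_⟩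
  simpa using h.dvd_apply _ _

end MinimalPivot

section SmithNormalForm

open Matrix

/-- The rectangular `m × n` matrix with diagonal entries `d 0, d 1, …`. Indexing the diagonal by `ℕ`
rather than by `Fin (min m n)` keeps `d` independent of the shape of the matrix. -/
def rectDiagonal {R : Type*} [Zero R] (m n : ℕ) (d : ℕ → R) : Matrix (Fin m) (Fin n) R :=
  of fun i j ↦ if (i : ℕ) = j then d i else 0

/-- Splits off the index `0`, so that a matrix indexed by `Fin (m + 1)` and `Fin (n + 1)` can be
written as a block matrix with its upper left entry as the first block. -/
def finSuccEquivUnitSum (n : ℕ) : Fin (n + 1) ≃ Unit ⊕ Fin n :=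
  (finSuccEquiv n).trans ((Equiv.optionEquivSumPUnit (Fin n)).trans (Equiv.sumComm _ _))

@[simp]
lemma finSuccEquivUnitSum_zero (n : ℕ) : finSuccEquivUnitSum n 0 = Sum.inl () := by
  simp [finSuccEquivUnitSum]

@[simp]
lemma finSuccEquivUnitSum_succ {n : ℕ} (i : Fin n) :
    finSuccEquivUnitSum n i.succ = Sum.inr i := by
  simp [finSuccEquivUnitSum]

lemma rectDiagonal_succ_succ {R : Type*} [Zero R] (m n : ℕ) (d : ℕ → R) :
    rectDiagonal (m + 1) (n + 1) d =
      (fromBlocks (of fun _ _ ↦ d 0) 0 0 (rectDiagonal m n fun i ↦ d (i + 1))).submatrix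
        (finSuccEquivUnitSum m) (finSuccEquivUnitSum n) := by
  ext i j
  cases i using Fin.cases <;> cases j using Fin.cases <;> simp [rectDiagonal]

lemma smul_rectDiagonal {R : Type*} [MulZeroClass R] (c : R) (m n : ℕ) (d : ℕ → R) :
    c • rectDiagonal m n d = rectDiagonal m n fun i ↦ c * d i := by
  ext i j
  simp [rectDiagonal]

lemma unimodularEquivalent_rectDiagonal_of_associated {R : Type*} [CommRing R] {m n : ℕ}
    {d e : ℕ → R} (h : ∀ i < m, Associated (d i) (e i)) :
    UnimodularEquivalent (rectDiagonal m n d) (rectDiagonal m n e) := by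
  choose u hu using fun i : Fin m ↦ h i i.isLt
  have hdet : IsUnit (diagonal fun i ↦ (u i : R)).det := by
    rw [det_diagonal, ← Units.coe_prod]
    exact Units.isUnit _
  convert UnimodularEquivalent.mul_left hdet (rectDiagonal m n d) using 1
  ext i j
  simp [rectDiagonal, diagonal_mul, ← hu, mul_comm]

lemma exists_unimodularEquivalent_fromBlocks_smul {R : Type*} [CommRing R] {m n : ℕ}
    {M : Matrix (Fin (m + 1)) (Fin (n + 1)) R} (hM : ∀ i j, M 0 0 ∣ M i j) :
    ∃ N : Matrix (Fin m) (Fin n) R, UnimodularEquivalent M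
      ((fromBlocks (of fun _ _ ↦ M 0 0) 0 0 (M 0 0 • N)).submatrix
        (finSuccEquivUnitSum m) (finSuccEquivUnitSum n)) := by
  choose Q hQ using hM
  let A : Matrix Unit Unit R := of fun _ _ ↦ M 0 0
  let B : Matrix Unit (Fin n) R := of fun _ j ↦ Q 0 j.succ
  let C : Matrix (Fin m) Unit R := of fun i _ ↦ Q i.succ 0
  let D : Matrix (Fin m) (Fin n) R := of fun i j ↦ Q i.succ j.succ
  have hblocks : M = (fromBlocks A (A * B) (C * A) (M 0 0 • D)).submatrix
      (finSuccEquivUnitSum m) (finSuccEquivUnitSum n) := by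
    ext i j
    cases i using Fin.cases <;> cases j using Fin.cases <;>
      simp [A, B, C, D, mul_apply, ← hQ, mul_comm (Q _ _)]
  have hschur : M 0 0 • D - C * A * B = M 0 0 • (D - C * B) := by
    have hCA : C * A = M 0 0 • C := by
      ext i j
      simp [A, mul_apply, mul_comm]
    rw [hCA, Matrix.smul_mul, smul_sub]
  refine ⟨D - C * B, ?_⟩
  nth_rw 1 [hblocks]
  rw [← hschur]
  exact (UnimodularEquivalent.fromBlocks_schur A B C (M 0 0 • D)).submatrix _ _

theorem exists_smith_normal_form {R : Type*} [EuclideanDomain R] :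
    ∀ (m n : ℕ) (M : Matrix (Fin m) (Fin n) R), ∃ d : ℕ → R,
      (∀ i, d i ∣ d (i + 1)) ∧ (∀ i, n ≤ i → d i = 0) ∧
        UnimodularEquivalent M (rectDiagonal m n d)
  | 0, n, M => ⟨0, by simp, by simp, by rw [Subsingleton.elim M]⟩
  | m + 1, 0, M => ⟨0, by simp, by simp, by rw [Subsingleton.elim M]⟩
  | m + 1, n + 1, M => by
    obtain ⟨P, hMP, hP⟩ := exists_unimodularEquivalent_forall_dvd M 0 0
    obtain ⟨N, hPN⟩ := exists_unimodularEquivalent_fromBlocks_smul hP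
    obtain ⟨d, hd, hd0, hNd⟩ := exists_smith_normal_form m n N
    set a := P 0 0
    let d' : ℕ → R := fun | 0 => a | k + 1 => a * d k
    refine ⟨d', ?_, ?_, hMP.trans (hPN.trans ?_)⟩
    · rintro (_ | i)
      · exact dvd_mul_right a (d 0)
      · exact mul_dvd_mul_left a (hd i)
    · rintro (_ | i) hi
      · omega
      · simp [d', hd0 i (by omega)]
    · rw [rectDiagonal_succ_succ, ← smul_rectDiagonal a m n d]
      exact ((UnimodularEquivalent.refl _).fromBlocks_diagonal (hNd.smul a)).submatrix _ _

end SmithNormalForm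

section Kernel

variable {ρ κ τ : ℕ} (A : Type*) [AddCommGroup A]

lemma matHom_apply (M : Matrix (Fin ρ) (Fin κ) ℤ) (x : Fin ρ → A) (j : Fin κ) :
    matHom A M x j = ∑ i, M i j • x i :=
  rfl

lemma matHom_one : matHom A (1 : Matrix (Fin ρ) (Fin ρ) ℤ) = AddMonoidHom.id _ := by
  ext x j
  simp [matHom_apply, Matrix.one_apply, ite_smul]

lemma matHom_mul (M : Matrix (Fin ρ) (Fin κ) ℤ) (N : Matrix (Fin κ) (Fin τ) ℤ) :
    matHom A (M * N) = (matHom A N).comp (matHom A M) := by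
  ext x j
  simp only [matHom_apply, AddMonoidHom.comp_apply, Matrix.mul_apply, Finset.sum_smul,
    Finset.smul_sum, smul_smul]
  rw [Finset.sum_comm]
  simp only [mul_comm]

/-- The automorphism of `A ^ ρ` given by `matHom A U` for a unimodular `U`, with inverse
`matHom A U⁻¹`. It transports kernels along an equivalence of matrices. -/
noncomputable def matEquiv {U : Matrix (Fin ρ) (Fin ρ) ℤ} (hU : IsUnit U.det) :
    (Fin ρ → A) ≃+ (Fin ρ → A) :=
  AddMonoidHom.toAddEquiv (matHom A U) (matHom A U⁻¹)
    (by rw [← matHom_mul, U.mul_nonsing_inv hU, matHom_one])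
    (by rw [← matHom_mul, U.nonsing_inv_mul hU, matHom_one])

variable {A}

lemma UnimodularEquivalent.nonempty_addEquiv_ker_matHom {M N : Matrix (Fin ρ) (Fin κ) ℤ}
    (h : UnimodularEquivalent M N) : Nonempty ((matHom A M).ker ≃+ (matHom A N).ker) := by
  obtain ⟨U, V, hU, hV, rfl⟩ := h
  have hker : (matHom A (U * M * V)).ker = (matHom A M).ker.map (matEquiv A hU).symm := by
    have hcomp : matHom A (U * M * V) =
        ((matEquiv A hV).toAddMonoidHom.comp (matHom A M)).comp (matEquiv A hU) := by
      rw [matHom_mul, matHom_mul]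
      rfl
    ext x
    simp [hcomp, AddMonoidHom.mem_ker]
  rw [hker]
  exact ⟨(matEquiv A hU).symm.addSubgroupMap _⟩

lemma mem_ker_matHom_rectDiagonal {d : ℕ → ℤ} (hd : ∀ i, κ ≤ i → d i = 0) (x : Fin ρ → A) :
    x ∈ (matHom A (rectDiagonal ρ κ d)).ker ↔ ∀ i : Fin ρ, d i • x i = 0 := by
  have hentry (i : Fin ρ) (j : Fin κ) (hij : (i : ℕ) = j) :
      matHom A (rectDiagonal ρ κ d) x j = d i • x i := by
    simp [matHom_apply, rectDiagonal, ite_smul, ← hij, Fin.val_inj]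
  rw [AddMonoidHom.mem_ker]
  constructor
  · intro hx i
    obtain hi | hi := lt_or_ge (i : ℕ) κ
    · rw [← hentry i ⟨i, hi⟩ rfl, hx, Pi.zero_apply]
    · rw [hd i hi, zero_smul]
  · intro hx
    ext j
    obtain hj | hj := lt_or_ge (j : ℕ) ρ
    · rw [hentry ⟨j, hj⟩ j rfl, hx, Pi.zero_apply]
    · have hzero (i : Fin ρ) : rectDiagonal ρ κ d i j = 0 := if_neg (by omega)
      simp [matHom_apply, hzero]

lemma card_ker_matHom_rectDiagonal [IsAddCyclic A] [Finite A] {d : ℕ → ℤ}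
    (hd : ∀ i, κ ≤ i → d i = 0) :
    Nat.card (matHom A (rectDiagonal ρ κ d)).ker =
      ∏ i : Fin ρ, (Nat.card A).gcd (d i).natAbs := by
  have hmem (x : Fin ρ → A) : x ∈ (matHom A (rectDiagonal ρ κ d)).ker ↔
      ∀ i : Fin ρ, x i ∈ (nsmulAddMonoidHom (α := A) (d i).natAbs).ker := by
    simp [mem_ker_matHom_rectDiagonal hd, AddMonoidHom.mem_ker]
  rw [Nat.card_congr ((Equiv.subtypeEquivRight hmem).trans Equiv.subtypePiEquivPi), Nat.card_pi]
  simp only [IsAddCyclic.card_nsmulAddMonoidHom_ker]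

lemma UnimodularEquivalent.card_ker_matHom [IsAddCyclic A] [Finite A]
    {M : Matrix (Fin ρ) (Fin κ) ℤ} {d : ℕ → ℤ}
    (h : UnimodularEquivalent M (rectDiagonal ρ κ d)) (hd : ∀ i, κ ≤ i → d i = 0) :
    Nat.card (matHom A M).ker = ∏ i : Fin ρ, (Nat.card A).gcd (d i).natAbs := by
  obtain ⟨φ⟩ := h.nonempty_addEquiv_ker_matHom (A := A)
  rw [Nat.card_congr φ.toEquiv, card_ker_matHom_rectDiagonal hd]

end Kernel

section GcdProducts

lemma dvd_of_forall_ne_zero_dvd {a b : ℕ} (h : ∀ n ≠ 0, n ∣ a → n ∣ b) : a ∣ b := by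
  obtain rfl | ha := eq_or_ne a 0
  · have hb : b + 1 ∣ b := h (b + 1) b.succ_ne_zero (dvd_zero _)
    rw [Nat.eq_zero_of_dvd_of_lt hb b.lt_succ_self]
  · exact h a ha dvd_rfl

variable {ι : Type*} [Fintype ι] [LinearOrder ι] {d e : ι → ℕ}

lemma dvd_of_prod_gcd_eq {n : ℕ} (hn : n ≠ 0) {i : ι} (hd : ∀ j, i ≤ j → d i ∣ d j)
    (h : ∏ j, n.gcd (d j) = ∏ j, n.gcd (e j)) (hlt : ∀ j < i, d j = e j)
    (hi : n ∣ d i) : n ∣ e i := by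
  have hmax (j : ι) (hj : i ≤ j) : n.gcd (d j) = n :=
    Nat.gcd_eq_left (hi.trans (hd j hj))
  have hle (j : ι) : n.gcd (e j) ≤ n.gcd (d j) := by
    obtain hj | hj := lt_or_ge j i
    · rw [hlt j hj]
    · exact (hmax j hj).symm ▸ Nat.gcd_le_left _ (Nat.pos_of_ne_zero hn)
  by_contra hne
  have hne_gcd : n.gcd (e i) ≠ n.gcd (d i) := by
    rwa [hmax i le_rfl, Ne, Nat.gcd_eq_left_iff_dvd]
  exact h.not_gt <| Finset.prod_lt_prod
    (fun j _ ↦ Nat.gcd_pos_of_pos_left _ (Nat.pos_of_ne_zero hn)) (fun j _ ↦ hle j)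
    ⟨i, Finset.mem_univ i, (hle i).lt_of_ne hne_gcd⟩

theorem eq_of_forall_prod_gcd_eq (hd : ∀ i j, i ≤ j → d i ∣ d j) (he : ∀ i j, i ≤ j → e i ∣ e j)
    (h : ∀ n : ℕ, n ≠ 0 → ∏ i, n.gcd (d i) = ∏ i, n.gcd (e i)) : d = e := by
  ext i
  induction i using WellFoundedLT.induction with
  | ind i ih =>
    exact Nat.dvd_antisymm
      (dvd_of_forall_ne_zero_dvd fun n hn ↦ dvd_of_prod_gcd_eq hn (hd i) (h n hn) ih)
      (dvd_of_forall_ne_zero_dvd fun n hn ↦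
        dvd_of_prod_gcd_eq hn (he i) (h n hn).symm fun j hj ↦ (ih j hj).symm)

end GcdProducts

theorem isomorphic_kernels_implies_equivalent_general {ρ κ : ℕ} {M M' : Matrix (Fin ρ) (Fin κ) ℤ}
    (hcard : ∀ (n : ℕ) [NeZero n],
      Nat.card (matHom (ZMod n) M).ker = Nat.card (matHom (ZMod n) M').ker) :
    UnimodularEquivalent M M' := by
  obtain ⟨d, hd, hd0, hMd⟩ := exists_smith_normal_form ρ κ M
  obtain ⟨e, he, he0, hMe⟩ := exists_smith_normal_form ρ κ M'
  have hchain {f : ℕ → ℤ} (hf : ∀ i, f i ∣ f (i + 1)) (i j : Fin ρ) (hij : i ≤ j) :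
      (f i).natAbs ∣ (f j).natAbs :=
    Int.natAbs_dvd_natAbs.2 (Nat.rel_of_forall_rel_succ_of_le (· ∣ ·) hf hij)
  have hprod (n : ℕ) (hn : n ≠ 0) :
      ∏ i : Fin ρ, n.gcd (d i).natAbs = ∏ i : Fin ρ, n.gcd (e i).natAbs := by
    have : NeZero n := ⟨hn⟩
    simpa only [hMd.card_ker_matHom hd0, hMe.card_ker_matHom he0, Nat.card_zmod] using hcard n
  have hde := congrFun (eq_of_forall_prod_gcd_eq (hchain hd) (hchain he) hprod)
  have hassoc (i : ℕ) (hi : i < ρ) : Associated (d i) (e i) :=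
    Int.associated_iff_natAbs.2 (hde ⟨i, hi⟩)
  exact hMd.trans <| (unimodularEquivalent_rectDiagonal_of_associated hassoc).trans hMe.symm

/-- If for every abelian group A the induced homomorphisms
`f_M, f_{M'} : A^ρ → A^κ` have isomorphic kernels, then the ρ×κ integer
matrices M and M' are equivalent via unimodular matrices. -/
theorem isomorphic_kernels_implies_equivalent (ρ κ : ℕ)
    (M M' : Matrix (Fin ρ) (Fin κ) ℤ)
    (hker : ∀ (A : Type) [AddCommGroup A],
      Nonempty ((matHom A M).ker ≃+ (matHom A M').ker)) :
    ∃ (U₁ : Matrix (Fin ρ) (Fin ρ) ℤ) (U₂ : Matrix (Fin κ) (Fin κ) ℤ),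
      IsUnit U₁.det ∧ IsUnit U₂.det ∧ U₁ * M * U₂ = M' := by
  exact isomorphic_kernels_implies_equivalent_general fun n _ ↦
    Nat.card_congr (hker (ZMod n)).some.toEquiv
end

section
/- Let D be an n×n diagonal integer matrix with non-negative diagonal entries d₀, …, d_{n−1} forming a decreasing divisibility chain (d_j ∣ d_{j−1} for 1 ≤ j ≤ n−1). Then for every k with 1 ≤ k ≤ n, the greatest common divisor of the determinants of all k×k submatrices of D equals the product d_{n−k}·d_{n−k+1}⋯d_{n−1} of the last k diagonal entries. -/
/-!
Pulling the column factors out of a `k × k` submatrix of `diagonal d` writes its determinant as a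
minor of the identity matrix times the product of the `k` entries of `d` at the chosen columns.
Listed in increasing order, these columns lie, position by position, weakly before the last `k`
indices, so along the divisibility chain the product of the last `k` entries divides every minor.
This product is itself a minor, hence it is the greatest common divisor.
-/

section DiagonalMinors

variable {ι κ R : Type*} [DecidableEq ι] [Fintype κ] [DecidableEq κ] [CommRing R]

theorem det_submatrix_diagonal (d : ι → R) (f g : κ → ι) :
    ((Matrix.diagonal d).submatrix f g).det =
      (∏ i, d (g i)) * ((1 : Matrix ι ι R).submatrix f g).det := by
  rw [← Matrix.det_mul_row]
  congr 1
  ext i j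
  by_cases h : f i = g j <;> simp [Matrix.one_apply, h]

theorem prod_dvd_det_submatrix_diagonal (d : ι → R) (f g : κ → ι) :
    ∏ i, d (g i) ∣ ((Matrix.diagonal d).submatrix f g).det :=
  Dvd.intro _ (det_submatrix_diagonal d f g).symm

end DiagonalMinors

section LastIndices

variable {k n : ℕ}

/-- The increasing enumeration `n - k, …, n - 1` of the last `k` indices of `Fin n`. -/
def lastIndex (hk : k ≤ n) (j : Fin k) : Fin n :=
  ⟨n - k + j, by omega⟩

theorem lastIndex_injective (hk : k ≤ n) : Function.Injective (lastIndex hk) := fun _ _ hij =>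
  Fin.ext (Nat.add_left_cancel (Fin.ext_iff.mp hij))

theorem le_lastIndex_of_strictMono (hk : k ≤ n) {f : Fin k → Fin n} (hf : StrictMono f)
    (i : Fin k) : f i ≤ lastIndex hk i := by
  -- `f` injects the `k - i` indices from `i` on into the `n - f i` indices from `f i` on.
  have hcard : (Finset.Ici i).card ≤ (Finset.Ici (f i)).card :=
    Finset.card_le_card_of_injOn f
      (fun _ hj => Finset.mem_coe.mpr (Finset.mem_Ici.mpr (hf.monotone (Finset.mem_Ici.mp hj))))
      hf.injective.injOn
  rw [Fin.card_Ici, Fin.card_Ici] at hcard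
  change (f i : ℕ) ≤ n - k + i
  omega

end LastIndices

section DivisibilityChain

variable {k n : ℕ} {M : Type*}

theorem dvd_of_le_of_forall_succ_dvd [Monoid M] {d : Fin n → M}
    (hchain : ∀ (j : ℕ) (hj : j + 1 < n), d ⟨j + 1, hj⟩ ∣ d ⟨j, Nat.lt_of_succ_lt hj⟩)
    {i j : Fin n} (hij : i ≤ j) : d j ∣ d i := by
  obtain ⟨j, hj⟩ := j
  change (i : ℕ) ≤ j at hij
  induction j, hij using Nat.le_induction with
  | base => exact dvd_rfl
  | succ j _ ih => exact (hchain j hj).trans (ih (Nat.lt_of_succ_lt hj))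

theorem prod_lastIndex_dvd_prod [CommMonoid M] {d : Fin n → M}
    (hd : ∀ ⦃i j⦄, i ≤ j → d j ∣ d i) (hk : k ≤ n) {g : Fin k → Fin n}
    (hg : Function.Injective g) : ∏ j, d (lastIndex hk j) ∣ ∏ i, d (g i) := by
  have hsorted : StrictMono (g ∘ Tuple.sort g) :=
    (Tuple.monotone_sort g).strictMono_of_injective (hg.comp (Tuple.sort g).injective)
  rw [← Equiv.prod_comp (Tuple.sort g) fun i => d (g i)]
  exact Finset.prod_dvd_prod_of_dvd _ _ fun i _ => hd (le_lastIndex_of_strictMono hk hsorted i)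

end DivisibilityChain

theorem gcd_minors_of_diagonal_chain_general {R : Type*} [CommRing R] [NormalizedGCDMonoid R]
    {k n : ℕ} (d : Fin n → R)
    (hchain : ∀ (j : ℕ) (hj : j + 1 < n), d ⟨j + 1, hj⟩ ∣ d ⟨j, Nat.lt_of_succ_lt hj⟩)
    (hk : k ≤ n) :
    (Finset.univ.filter (fun p : (Fin k → Fin n) × (Fin k → Fin n) =>
        Function.Injective p.1 ∧ Function.Injective p.2)).gcd
      (fun p => ((Matrix.diagonal d).submatrix p.1 p.2).det) =
    normalize (∏ j, d (lastIndex hk j)) := by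
  rw [← Finset.normalize_gcd]
  apply normalize_eq_normalize
  · have hinj := lastIndex_injective hk
    have hminor : ((Matrix.diagonal d).submatrix (lastIndex hk) (lastIndex hk)).det =
        ∏ j, d (lastIndex hk j) := by
      rw [Matrix.submatrix_diagonal d _ hinj, Matrix.det_diagonal]
      rfl
    rw [← hminor]
    exact Finset.gcd_dvd (b := (lastIndex hk, lastIndex hk))
      (Finset.mem_filter.mpr ⟨Finset.mem_univ _, hinj, hinj⟩)
  · refine Finset.dvd_gcd fun p hp => ?_
    have hcols : Function.Injective p.2 := (Finset.mem_filter.mp hp).2.2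
    exact (prod_lastIndex_dvd_prod (fun _ _ => dvd_of_le_of_forall_succ_dvd hchain) hk hcols).trans
      (prod_dvd_det_submatrix_diagonal d p.1 p.2)

/-- If `D` is the n×n diagonal integer matrix with non-negative
diagonal entries `d 0, …, d (n-1)` forming a decreasing divisibility chain,
then for `1 ≤ k ≤ n` the gcd of the determinants of all k×k submatrices of `D`
equals the product of the last `k` diagonal entries. -/
theorem gcd_minors_of_diagonal_chain (n : ℕ) (d : Fin n → ℤ)
    (hnonneg : ∀ j, 0 ≤ d j)
    (hchain : ∀ (j : ℕ) (hj : j + 1 < n), d ⟨j + 1, hj⟩ ∣ d ⟨j, by omega⟩)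
    (k : ℕ) (hk1 : 1 ≤ k) (hk2 : k ≤ n) :
    (Finset.univ.filter (fun p : (Fin k → Fin n) × (Fin k → Fin n) =>
        Function.Injective p.1 ∧ Function.Injective p.2)).gcd
      (fun p => ((Matrix.diagonal d).submatrix p.1 p.2).det) =
    ∏ j : Fin k, d ⟨n - k + (j : ℕ), by have := j.isLt; omega⟩ :=
  (gcd_minors_of_diagonal_chain_general d hchain hk2).trans
    (Int.normalize_of_nonneg (Finset.prod_nonneg fun _ _ => hnonneg _))
end
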